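/- arXiv:2009.00052 — 2 statements merged into one kernel-verified Lean document; each statement's English description precedes it below -/
import Mathlib

section
/- Almost surely, e^{−2α t} ∫_0^t e^{2α s} ζ_s² ds → (α/2) · Z_∞² as t → ∞, where ζ_s := e^{−α s} B_s + α Z_s. -/
open MeasureTheory ProbabilityTheory Filter

/-!
Put `f s = e^{-α s} B_s`, so that `Z` is the primitive of `f` and `ζ = f + α Z`. Since
`(e^{2α s} Z²)' = e^{2α s} (2α Z² + 2 f Z)`,
`e^{2α s} ζ² = (α/2) (e^{2α s} Z²)' + e^{2α s} (f² + α f Z)`.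
Integrating, the first term contributes `(α/2) Z_t² → (α/2) Z_∞²` after multiplication by
`e^{-2α t}`. As soon as `f` lies in `L¹ ∩ L²`, the function `f² + α f Z` is integrable on `(0, ∞)`,
and the second term vanishes in the limit by dominated convergence. Almost every path satisfies
`f ∈ L¹ ∩ L²` by Tonelli, because `∫₀^∞ e^{-α s} E[B_s²] ds = ∫₀^∞ e^{-α s} s^{2H} ds < ∞`.
-/

open scoped Topology

section ExponentialAverages

variable {E : Type*} [NormedAddCommGroup E] [NormedSpace ℝ E] {μ : Measure ℝ}

lemma exp_smul_intervalIntegral_eq_integral_indicator {a t : ℝ} (hat : a ≤ t) (c : ℝ) (g : ℝ → E) :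
    Real.exp (-c * t) • ∫ s in a..t, Real.exp (c * s) • g s ∂μ =
      ∫ s in Set.Ioi a, (Set.Iic t).indicator (fun s => Real.exp (-c * (t - s)) • g s) s ∂μ := by
  rw [← intervalIntegral.integral_smul, intervalIntegral.integral_of_le hat,
    setIntegral_indicator measurableSet_Iic, Set.Ioi_inter_Iic]
  congr 1 with s
  rw [smul_smul, ← Real.exp_add]
  ring_nf

lemma tendsto_exp_neg_mul_sub_atTop {c : ℝ} (hc : 0 < c) (s : ℝ) :
    Tendsto (fun t => Real.exp (-c * (t - s))) atTop (𝓝 0) :=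
  Real.tendsto_exp_comp_nhds_zero.2 <|
    (tendsto_atTop_add_const_right atTop (-s) tendsto_id).const_mul_atTop_of_neg (neg_lt_zero.2 hc)

lemma tendsto_exp_smul_integral_exp_smul_zero {c : ℝ} (hc : 0 < c) {a : ℝ} {g : ℝ → E}
    (hg : IntegrableOn g (Set.Ioi a) μ) :
    Tendsto (fun t => Real.exp (-c * t) • ∫ s in a..t, Real.exp (c * s) • g s ∂μ)
      atTop (𝓝 0) := by
  suffices hlim : Tendsto (fun t => ∫ s in Set.Ioi a,
      (Set.Iic t).indicator (fun s => Real.exp (-c * (t - s)) • g s) s ∂μ) atTop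
      (𝓝 (∫ _ in Set.Ioi a, (0 : E) ∂μ)) by
    rw [integral_zero] at hlim
    refine hlim.congr' ?_
    filter_upwards [eventually_ge_atTop a] with t hat
    exact (exp_smul_intervalIntegral_eq_integral_indicator hat c g).symm
  refine tendsto_integral_filter_of_dominated_convergence (fun s => ‖g s‖)
    (.of_forall fun t => ?_) (.of_forall fun t => .of_forall fun s => ?_) hg.norm
    (.of_forall fun s => ?_)
  · have hexp : Continuous fun s => Real.exp (-c * (t - s)) := by fun_prop
    exact (hexp.aestronglyMeasurable.smul hg.aestronglyMeasurable).indicator measurableSet_Iic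
  · by_cases hst : s ∈ Set.Iic t
    · have hexp : Real.exp (-c * (t - s)) ≤ 1 := by
        rw [Real.exp_le_one_iff, neg_mul]
        exact neg_nonpos.2 (mul_nonneg hc.le (sub_nonneg.2 hst))
      rw [Set.indicator_of_mem hst, norm_smul, Real.norm_eq_abs, Real.abs_exp]
      exact mul_le_of_le_one_left (norm_nonneg _) hexp
    · rw [Set.indicator_of_notMem hst, norm_zero]
      exact norm_nonneg _
  · have hdecay : Tendsto (fun t => Real.exp (-c * (t - s)) • g s) atTop (𝓝 0) := by
      simpa only [zero_smul] using (tendsto_exp_neg_mul_sub_atTop hc s).smul_const (g s)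
    exact squeeze_zero_norm (fun t => norm_indicator_le_norm_self _ _)
      (tendsto_zero_iff_norm_tendsto_zero.1 hdecay)

end ExponentialAverages

section Primitive

variable {f : ℝ → ℝ} {a : ℝ}

lemma integral_exp_mul_sq_primitive {b : ℝ} (hf : IntervalIntegrable f volume a b) (c : ℝ) :
    ∫ s in a..b, Real.exp (c * s) *
        (c * (∫ u in a..s, f u) ^ 2 + 2 * ((∫ u in a..s, f u) * f s)) =
      Real.exp (c * b) * (∫ u in a..b, f u) ^ 2 := by
  set F : ℝ → ℝ := fun s => ∫ u in a..s, f u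
  have hF : AbsolutelyContinuousOnInterval F a b :=
    hf.absolutelyContinuousOnInterval_intervalIntegral Set.left_mem_uIcc
  have hexp : AbsolutelyContinuousOnInterval (fun s => Real.exp (c * s)) a b :=
    ContDiffOn.absolutelyContinuousOnInterval (by fun_prop)
  have hparts := (hexp.fun_mul (hF.fun_mul hF)).integral_deriv_eq_sub
  have hFa : F a = 0 := intervalIntegral.integral_same
  calc ∫ s in a..b, Real.exp (c * s) * (c * F s ^ 2 + 2 * (F s * f s))
      = ∫ s in a..b, deriv (fun x => Real.exp (c * x) * (F x * F x)) s := by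
        refine intervalIntegral.integral_congr_ae ?_
        filter_upwards [hf.ae_hasDerivAt_integral] with s hderiv hs
        have hFs : HasDerivAt F (f s) s :=
          hderiv (Set.uIoc_subset_uIcc hs) a Set.left_mem_uIcc
        have hexps : HasDerivAt (fun x => Real.exp (c * x)) (Real.exp (c * s) * c) s := by
          simpa using ((hasDerivAt_id s).const_mul c).exp
        rw [(hexps.fun_mul (hFs.fun_mul hFs)).deriv]
        ring
    _ = Real.exp (c * b) * F b ^ 2 := by rw [hparts, hFa]; ring

lemma integrableOn_primitive_mul (hf : IntegrableOn f (Set.Ioi a)) :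
    IntegrableOn (fun s => (∫ u in a..s, f u) * f s) (Set.Ioi a) := by
  have hcont : ContinuousOn (fun s => ∫ u in a..s, f u) (Set.Ioi a) := by
    have htail := continuousOn_const (c := ∫ u in Set.Ioi a, f u).sub
      hf.continuousOn_Ici_primitive_Ioi
    exact (htail.mono Set.Ioi_subset_Ici_self).congr fun s hs =>
      (intervalIntegral.integral_Ioi_sub_Ioi hf (le_of_lt hs)).symm
  refine Integrable.bdd_mul (c := ∫ u in Set.Ioi a, ‖f u‖) hf
    (hcont.aestronglyMeasurable measurableSet_Ioi) ?_
  filter_upwards [ae_restrict_mem measurableSet_Ioi] with s hs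
  rw [intervalIntegral.integral_of_le (le_of_lt hs)]
  exact (norm_integral_le_integral_norm f).trans <| setIntegral_mono_set hf.norm
    (.of_forall fun _ => norm_nonneg _) Set.Ioc_subset_Ioi_self.eventuallyLE

lemma exp_mul_integral_exp_mul_sq_add_primitive {c t : ℝ} (hc : c ≠ 0)
    (hf : IntervalIntegrable f volume a t)
    (hf2 : IntervalIntegrable (fun s => f s ^ 2) volume a t) (β : ℝ) :
    Real.exp (-c * t) * ∫ s in a..t, Real.exp (c * s) * (f s + β * ∫ u in a..s, f u) ^ 2 =
      β ^ 2 / c * (∫ u in a..t, f u) ^ 2 +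
        Real.exp (-c * t) * ∫ s in a..t, Real.exp (c * s) *
          (f s ^ 2 + (2 * β - 2 * β ^ 2 / c) * ((∫ u in a..s, f u) * f s)) := by
  set F : ℝ → ℝ := fun s => ∫ u in a..s, f u
  have hF : ContinuousOn F (Set.uIcc a t) :=
    intervalIntegral.continuousOn_primitive_interval' hf Set.left_mem_uIcc
  have hFf : IntervalIntegrable (fun s => F s * f s) volume a t := hf.continuousOn_mul hF
  have hexp : ContinuousOn (fun s => Real.exp (c * s)) (Set.uIcc a t) := by fun_prop
  have htotal : IntervalIntegrable (fun s => Real.exp (c * s) * (c * F s ^ 2 + 2 * (F s * f s)))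
      volume a t :=
    (((hF.pow 2).intervalIntegrable.const_mul c).add (hFf.const_mul 2)).continuousOn_mul hexp
  have hremainder : IntervalIntegrable (fun s => Real.exp (c * s) *
      (f s ^ 2 + (2 * β - 2 * β ^ 2 / c) * (F s * f s))) volume a t :=
    (hf2.add (hFf.const_mul _)).continuousOn_mul hexp
  have hsplit : ∀ s, Real.exp (c * s) * (f s + β * F s) ^ 2 =
      β ^ 2 / c * (Real.exp (c * s) * (c * F s ^ 2 + 2 * (F s * f s))) +
        Real.exp (c * s) * (f s ^ 2 + (2 * β - 2 * β ^ 2 / c) * (F s * f s)) := fun s => by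
    field_simp
    ring
  have hcancel : Real.exp (-c * t) * Real.exp (c * t) = 1 := by
    rw [← Real.exp_add, neg_mul, neg_add_cancel, Real.exp_zero]
  calc Real.exp (-c * t) * ∫ s in a..t, Real.exp (c * s) * (f s + β * F s) ^ 2
      = Real.exp (-c * t) * (β ^ 2 / c * (Real.exp (c * t) * F t ^ 2) +
          ∫ s in a..t, Real.exp (c * s) *
            (f s ^ 2 + (2 * β - 2 * β ^ 2 / c) * (F s * f s))) := by
        simp only [hsplit]
        rw [intervalIntegral.integral_add (htotal.const_mul _) hremainder,
          intervalIntegral.integral_const_mul, integral_exp_mul_sq_primitive hf]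
    _ = β ^ 2 / c * F t ^ 2 + Real.exp (-c * t) * ∫ s in a..t, Real.exp (c * s) *
          (f s ^ 2 + (2 * β - 2 * β ^ 2 / c) * (F s * f s)) := by
        linear_combination β ^ 2 / c * F t ^ 2 * hcancel

theorem tendsto_exp_mul_integral_exp_mul_sq_add_primitive {c : ℝ} (hc : 0 < c)
    (hf : IntegrableOn f (Set.Ioi a)) (hf2 : IntegrableOn (fun s => f s ^ 2) (Set.Ioi a)) (β : ℝ) :
    Tendsto (fun t => Real.exp (-c * t) *
        ∫ s in a..t, Real.exp (c * s) * (f s + β * ∫ u in a..s, f u) ^ 2)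
      atTop (𝓝 (β ^ 2 / c * (∫ s in Set.Ioi a, f s) ^ 2)) := by
  have hprimitive : Tendsto (fun t => ∫ u in a..t, f u) atTop (𝓝 (∫ s in Set.Ioi a, f s)) :=
    intervalIntegral_tendsto_integral_Ioi a hf tendsto_id
  have hremainder := tendsto_exp_smul_integral_exp_smul_zero hc
    (hf2.add ((integrableOn_primitive_mul hf).const_mul (2 * β - 2 * β ^ 2 / c)))
  have hsum := ((hprimitive.pow 2).const_mul (β ^ 2 / c)).add hremainder
  rw [add_zero] at hsum
  refine hsum.congr' ?_
  filter_upwards [eventually_ge_atTop a] with t hat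
  have hIoc : Set.Ioc a t ⊆ Set.Ioi a := Set.Ioc_subset_Ioi_self
  exact (exp_mul_integral_exp_mul_sq_add_primitive hc.ne'
    ((intervalIntegrable_iff_integrableOn_Ioc_of_le hat).2 (hf.mono_set hIoc))
    ((intervalIntegrable_iff_integrableOn_Ioc_of_le hat).2 (hf2.mono_set hIoc)) β).symm

end Primitive

lemma integrable_mul_of_integrable_mul_sq {X : Type*} [MeasurableSpace X] {μ : Measure X}
    {w b : X → ℝ} (hb : AEStronglyMeasurable b μ) (hw : Integrable w μ)
    (hwb : Integrable (fun x => w x * b x ^ 2) μ) : Integrable (fun x => w x * b x) μ := by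
  refine (hw.norm.add hwb.norm).mono' (hw.aestronglyMeasurable.mul hb) (.of_forall fun x => ?_)
  have hle : |b x| ≤ 1 + b x ^ 2 := by
    rw [← sq_abs]
    nlinarith [sq_nonneg (|b x| - 1)]
  calc ‖w x * b x‖ = |w x| * |b x| := abs_mul _ _
    _ ≤ |w x| * (1 + b x ^ 2) := by gcongr
    _ = ‖w x‖ + ‖w x * b x ^ 2‖ := by
      simp only [norm_mul, Real.norm_eq_abs, abs_pow, sq_abs]; ring

theorem tendsto_exp_mul_integral_exp_mul_sq_discounted {α : ℝ} (hα : 0 < α) {b : ℝ → ℝ}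
    (hb : AEStronglyMeasurable b (volume.restrict (Set.Ioi 0)))
    (hb2 : IntegrableOn (fun s => Real.exp (-α * s) * b s ^ 2) (Set.Ioi 0)) :
    Tendsto (fun t => Real.exp (-2 * α * t) * ∫ s in (0 : ℝ)..t, Real.exp (2 * α * s) *
        (Real.exp (-α * s) * b s + α * ∫ u in (0 : ℝ)..s, Real.exp (-α * u) * b u) ^ 2)
      atTop (𝓝 (α / 2 * (∫ s in Set.Ioi (0 : ℝ), Real.exp (-α * s) * b s) ^ 2)) := by
  have hf : IntegrableOn (fun s => Real.exp (-α * s) * b s) (Set.Ioi 0) :=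
    integrable_mul_of_integrable_mul_sq hb
      (integrableOn_exp_mul_Ioi (neg_lt_zero.2 hα) 0) hb2
  have hf2 : IntegrableOn (fun s => (Real.exp (-α * s) * b s) ^ 2) (Set.Ioi 0) := by
    have hweight : ∀ᵐ s ∂volume.restrict (Set.Ioi (0 : ℝ)), ‖Real.exp (-α * s)‖ ≤ 1 := by
      filter_upwards [ae_restrict_mem measurableSet_Ioi] with s hs
      rw [Real.norm_eq_abs, Real.abs_exp, Real.exp_le_one_iff, neg_mul]
      exact neg_nonpos.2 (mul_pos hα hs).le
    refine (hb2.bdd_mul (Continuous.aestronglyMeasurable (by fun_prop)) hweight).congr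
      (.of_forall fun s => by ring)
  have hcoeff : α ^ 2 / (2 * α) = α / 2 := by field_simp
  simpa only [hcoeff, neg_mul, mul_assoc] using
    tendsto_exp_mul_integral_exp_mul_sq_add_primitive (mul_pos two_pos hα) hf hf2 α

section Processes

variable {Ω : Type*} [MeasurableSpace Ω] {P : Measure Ω}

lemma aestronglyMeasurable_uncurry_of_ae_continuousOn {ι E : Type*} [TopologicalSpace ι]
    [TopologicalSpace.MetrizableSpace ι] [MeasurableSpace ι] [SecondCountableTopology ι]
    [OpensMeasurableSpace ι] [TopologicalSpace E] [TopologicalSpace.PseudoMetrizableSpace E]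
    [Zero E] {μ : Measure ι} {T : Set ι} (hT : MeasurableSet T) {X : ι → Ω → E}
    (hmeas : ∀ t ∈ T, StronglyMeasurable (X t))
    (hcont : ∀ᵐ ω ∂P, ContinuousOn (fun t => X t ω) T) :
    AEStronglyMeasurable (Function.uncurry X) ((μ.restrict T).prod P) := by
  obtain ⟨N, hN, hNmeas, hN0⟩ := exists_measurable_superset_of_null hcont
  have hext : StronglyMeasurable
      (Function.uncurry fun (t : T) (ω : Ω) => Nᶜ.indicator (X t) ω) := by
    refine stronglyMeasurable_uncurry_of_continuous_of_stronglyMeasurable (fun ω => ?_)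
      fun t => (hmeas t t.2).indicator hNmeas.compl
    by_cases hω : ω ∈ N
    · simpa [hω] using continuous_const
    · simpa [hω] using! (not_not.1 (mt (@hN ω) hω)).domRestrict
  obtain ⟨Y, hY, hYext⟩ := ((MeasurableEmbedding.subtype_coe hT).prodMap
    (MeasurableEmbedding.id (α := Ω))).exists_stronglyMeasurable_extend hext
    (fun _ => ⟨(0 : E)⟩)
  refine ⟨Y, hY, ?_⟩
  filter_upwards [Measure.quasiMeasurePreserving_fst.ae (ae_restrict_mem hT),
    Measure.quasiMeasurePreserving_snd.ae (measure_eq_zero_iff_ae_notMem.1 hN0)]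
    with ⟨t, ω⟩ ht hω
  have hYtω := congrFun hYext (⟨t, ht⟩, ω)
  simpa [hω] using hYtω.symm

variable [SFinite P]

lemma ae_integrable_mul_sq_of_integrable_mul_moment {X : Type*} [MeasurableSpace X]
    {μ : Measure X} [SFinite μ] {B : X → Ω → ℝ} {w : X → ℝ}
    (hB : AEStronglyMeasurable (Function.uncurry B) (μ.prod P)) (hw : AEStronglyMeasurable w μ)
    (hB2 : ∀ᵐ x ∂μ, Integrable (fun ω => B x ω ^ 2) P)
    (hmoment : Integrable (fun x => w x * ∫ ω, B x ω ^ 2 ∂P) μ) :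
    ∀ᵐ ω ∂P, Integrable (fun x => w x * B x ω ^ 2) μ := by
  have hmeas : AEStronglyMeasurable (fun p : X × Ω => w p.1 * B p.1 p.2 ^ 2) (μ.prod P) :=
    hw.comp_fst.mul (hB.pow 2)
  refine ((integrable_prod_iff hmeas).2 ⟨?_, ?_⟩).prod_left_ae
  · filter_upwards [hB2] with x hx using hx.const_mul (w x)
  · refine hmoment.norm.congr (.of_forall fun x => ?_)
    simp only [norm_mul, integral_const_mul, norm_pow, Real.norm_eq_abs, sq_abs]
    rw [abs_of_nonneg (integral_nonneg fun ω => sq_nonneg _)]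

theorem stmt_11_general {B : ℝ → Ω → ℝ}
    (hB : AEStronglyMeasurable (Function.uncurry B) ((volume.restrict (Set.Ioi 0)).prod P))
    (hB2 : ∀ᵐ s ∂volume.restrict (Set.Ioi 0), Integrable (fun ω => B s ω ^ 2) P)
    {α : ℝ} (hα : 0 < α)
    (hmoment : IntegrableOn (fun s => Real.exp (-α * s) * ∫ ω, B s ω ^ 2 ∂P) (Set.Ioi 0))
    {Z : ℝ → Ω → ℝ}
    (hZ : ∀ (t : ℝ) (ω : Ω), Z t ω = ∫ s in (0 : ℝ)..t, Real.exp (-α * s) * B s ω)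
    {Zinf : Ω → ℝ}
    (hZinf : ∀ ω : Ω, Zinf ω = ∫ s in Set.Ioi (0 : ℝ), Real.exp (-α * s) * B s ω) :
    ∀ᵐ ω ∂P, Tendsto (fun t : ℝ => Real.exp (-2 * α * t) *
        ∫ s in (0 : ℝ)..t, Real.exp (2 * α * s) * (Real.exp (-α * s) * B s ω + α * Z s ω) ^ 2)
      atTop (𝓝 (α / 2 * Zinf ω ^ 2)) := by
  have hweight : Continuous fun s => Real.exp (-α * s) := by fun_prop
  filter_upwards [hB.prodMk_right, ae_integrable_mul_sq_of_integrable_mul_moment hB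
    hweight.aestronglyMeasurable hB2 hmoment] with ω hpath hpath2
  simpa only [hZ, hZinf] using
    tendsto_exp_mul_integral_exp_mul_sq_discounted (b := fun s => B s ω) hα hpath hpath2

end Processes

lemma integral_sq_eq_rpow_of_fractional_covariance {Ω : Type*} [MeasurableSpace Ω] {P : Measure Ω}
    {H : ℝ} (hH : H ≠ 0) {B : ℝ → Ω → ℝ}
    (hBcov : ∀ s t : ℝ, 0 ≤ s → 0 ≤ t →
      ∫ ω, B s ω * B t ω ∂P = 1 / 2 * (s ^ (2 * H) + t ^ (2 * H) - |t - s| ^ (2 * H)))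
    {t : ℝ} (ht : 0 ≤ t) : ∫ ω, B t ω ^ 2 ∂P = t ^ (2 * H) := by
  simp only [sq, hBcov t t ht ht, sub_self, abs_zero, Real.zero_rpow (mul_ne_zero two_ne_zero hH)]
  ring

lemma integrableOn_exp_neg_mul_mul_rpow {α p : ℝ} (hα : 0 < α) (hp : -1 < p) :
    IntegrableOn (fun s => Real.exp (-α * s) * s ^ p) (Set.Ioi 0) := by
  simpa only [Real.rpow_one, mul_comm (Real.exp _)] using
    integrableOn_rpow_mul_exp_neg_mul_rpow hp one_pos hα

/-- Almost surely, `e^{-2α t} ∫_0^t e^{2α s} ζ_s² ds → (α/2) Z_∞²` as `t → ∞`,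
where `ζ_s := e^{-α s} B_s + α Z_s`. -/
theorem stmt_11 {Ω : Type*} [MeasurableSpace Ω] (P : Measure Ω) [IsProbabilityMeasure P]
    (H : ℝ) (hH1 : 1 / 2 ≤ H) (hH2 : H < 1)
    (B : ℝ → Ω → ℝ)
    (hBmeas : ∀ t : ℝ, Measurable (B t))
    (hBgauss : ∀ (m : ℕ) (t : Fin m → ℝ) (c : Fin m → ℝ), (∀ i, 0 ≤ t i) →
      ∃ v : NNReal, Measure.map (fun ω => ∑ i, c i * B (t i) ω) P = gaussianReal 0 v)
    (hB0 : ∀ ω, B 0 ω = 0)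
    (hBcov : ∀ s t : ℝ, 0 ≤ s → 0 ≤ t →
      ∫ ω, B s ω * B t ω ∂P = 1 / 2 * (s ^ (2 * H) + t ^ (2 * H) - |t - s| ^ (2 * H)))
    (hBcont : ∀ᵐ ω ∂P, ContinuousOn (fun t => B t ω) (Set.Ici (0 : ℝ)))
    (α : ℝ) (hα : 0 < α)
    (Z : ℝ → Ω → ℝ)
    (hZ : ∀ (t : ℝ) (ω : Ω), Z t ω = ∫ s in (0:ℝ)..t, Real.exp (-α * s) * B s ω)
    (Zinf : Ω → ℝ)
    (hZinf : ∀ ω : Ω, Zinf ω = ∫ s in Set.Ioi (0:ℝ), Real.exp (-α * s) * B s ω) :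
    ∀ᵐ ω ∂P, Tendsto (fun t : ℝ => Real.exp (-2 * α * t) *
        ∫ s in (0:ℝ)..t, Real.exp (2 * α * s) * (Real.exp (-α * s) * B s ω + α * Z s ω) ^ 2)
      atTop (nhds (α / 2 * Zinf ω ^ 2)) := by
  have hsq : ∀ s ∈ Set.Ioi (0 : ℝ), ∫ ω, B s ω ^ 2 ∂P = s ^ (2 * H) := fun s hs =>
    integral_sq_eq_rpow_of_fractional_covariance (by linarith) hBcov (le_of_lt hs)
  have hsq_integrable : ∀ s ∈ Set.Ioi (0 : ℝ), Integrable (fun ω => B s ω ^ 2) P := fun s hs =>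
    .of_integral_ne_zero (hsq s hs ▸ (Real.rpow_pos_of_pos hs _).ne')
  have hmoment : IntegrableOn (fun s => Real.exp (-α * s) * ∫ ω, B s ω ^ 2 ∂P) (Set.Ioi 0) :=
    (integrableOn_exp_neg_mul_mul_rpow (p := 2 * H) hα (by linarith)).congr_fun
      (fun s hs => by rw [hsq s hs]) measurableSet_Ioi
  have hjoint := aestronglyMeasurable_uncurry_of_ae_continuousOn (μ := volume) measurableSet_Ioi
    (fun s _ => (hBmeas s).stronglyMeasurable)
    (hBcont.mono fun ω hω => hω.mono Set.Ioi_subset_Ici_self)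
  exact stmt_11_general hjoint (ae_restrict_of_forall_mem measurableSet_Ioi hsq_integrable) hα
    hmoment hZ hZinf
end

section
/- Almost surely, as the integer n → ∞, e^{−α n} X_n converges to A_∞ + α Z_∞. -/
open MeasureTheory ProbabilityTheory Filter

/-!
Multiplying out, `e^{-αn} X_n = A_n + α Z_n + e^{-αn} B_n`. Periodicity of `L` makes `A_n` a
geometric sum with ratio `e^{-α}`. The rest only uses that `E|B_t|` grows more slowly than
`e^{αt}`: by Tonelli, `∑ e^{-αn} |B_n|` and `∫ e^{-αs} |B_s| ds` have finite expectation, hence are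
almost surely finite, so `e^{-αn} B_n → 0` and `Z_n → Z_∞`. For fractional Brownian motion
`E|B_t| ≤ t^H` by Jensen's inequality.
-/

section QuasiPeriodic

lemma apply_add_natCast_mul_of_apply_add_eq_smul {R M G : Type*} [Semiring R] [Monoid M]
    [MulAction M G] {f : R → G} {T : R} {q : M} (hf : ∀ s, f (s + T) = q • f s) (k : ℕ) (s : R) :
    f (s + k * T) = q ^ k • f s := by
  induction k with
  | zero => simp
  | succ k ih =>
    rw [Nat.cast_succ, add_one_mul, ← add_assoc, hf, ih, smul_smul, pow_succ']

variable {E : Type*} [NormedAddCommGroup E] [NormedSpace ℝ E] {f : ℝ → E} {T q : ℝ}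

lemma intervalIntegral_natCast_mul_eq_geom_sum_smul (hf : ∀ s, f (s + T) = q • f s)
    (hint : IntervalIntegrable f volume 0 T) (n : ℕ) :
    ∫ s in (0 : ℝ)..n * T, f s = (∑ k ∈ Finset.range n, q ^ k) • ∫ s in (0 : ℝ)..T, f s := by
  have hshift (k : ℕ) : (fun s => f (s + k * T)) = fun s => q ^ k • f s :=
    funext (apply_add_natCast_mul_of_apply_add_eq_smul hf k)
  have hint_period (k : ℕ) : IntervalIntegrable f volume (0 + k * T) (T + k * T) := by
    rw [← IntervalIntegrable.comp_add_right_iff, hshift]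
    exact hint.smul (q ^ k)
  have hintegral_period (k : ℕ) :
      ∫ s in (0 + k * T)..(T + k * T), f s = q ^ k • ∫ s in (0 : ℝ)..T, f s := by
    rw [← intervalIntegral.integral_comp_add_right, hshift, intervalIntegral.integral_smul]
  have hend (k : ℕ) : T + k * T = ((k + 1 : ℕ) : ℝ) * T := by push_cast; ring
  simp only [zero_add, hend] at hint_period hintegral_period
  have hsum := intervalIntegral.sum_integral_adjacent_intervals
    (a := fun k : ℕ => (k : ℝ) * T) (n := n) fun k _ => hint_period k
  simp only [hintegral_period, Nat.cast_zero, zero_mul] at hsum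
  rw [← hsum, Finset.sum_smul]

lemma tendsto_intervalIntegral_natCast_mul_of_apply_add_eq_smul (hq : |q| < 1)
    (hf : ∀ s, f (s + T) = q • f s) (hint : IntervalIntegrable f volume 0 T) :
    Tendsto (fun n : ℕ => ∫ s in (0 : ℝ)..n * T, f s) atTop
      (nhds ((1 - q)⁻¹ • ∫ s in (0 : ℝ)..T, f s)) := by
  simp only [intervalIntegral_natCast_mul_eq_geom_sum_smul hf hint]
  exact (hasSum_geometric_of_abs_lt_one hq).tendsto_sum_nat.smul_const _

lemma tendsto_intervalIntegral_exp_smul_of_periodic {α : ℝ} {L : ℝ → E} (hα : 0 < α)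
    (hper : Function.Periodic L 1) (hint : IntervalIntegrable L volume 0 1) :
    Tendsto (fun n : ℕ => ∫ s in (0 : ℝ)..n, Real.exp (-α * s) • L s) atTop
      (nhds ((1 - Real.exp (-α))⁻¹ • ∫ s in (0 : ℝ)..1, Real.exp (-α * s) • L s)) := by
  have hratio : |Real.exp (-α)| < 1 := by
    rw [Real.abs_exp, Real.exp_lt_one_iff]
    exact neg_lt_zero.mpr hα
  have hquasi (s : ℝ) :
      Real.exp (-α * (s + 1)) • L (s + 1) = Real.exp (-α) • Real.exp (-α * s) • L s := by
    rw [hper, smul_smul, ← Real.exp_add]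
    ring_nf
  simpa only [mul_one] using tendsto_intervalIntegral_natCast_mul_of_apply_add_eq_smul hratio hquasi
    (hint.continuousOn_smul (Continuous.continuousOn (by fun_prop)))

end QuasiPeriodic

section AlmostSureFiniteness

variable {Ω ι E : Type*} [MeasurableSpace Ω] {P : Measure Ω}

lemma ae_tendsto_zero_of_tsum_lintegral_enorm_ne_top [NormedAddCommGroup E] {f : ℕ → Ω → E}
    (hf : ∀ n, AEStronglyMeasurable (f n) P) (hsum : ∑' n, ∫⁻ ω, ‖f n ω‖ₑ ∂P ≠ ⊤) :
    ∀ᵐ ω ∂P, Tendsto (fun n => f n ω) atTop (nhds 0) := by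
  have hmeas (n : ℕ) : AEMeasurable (fun ω => ‖f n ω‖ₑ) P := (hf n).enorm
  rw [← lintegral_tsum hmeas] at hsum
  filter_upwards [ae_lt_top' (AEMeasurable.tsum hmeas) hsum] with ω hω
  exact tendsto_zero_iff_enorm_tendsto_zero.mpr
    (ENNReal.tendsto_atTop_zero_of_tsum_ne_top hω.ne)

variable [TopologicalSpace ι] [TopologicalSpace.MetrizableSpace ι] [SecondCountableTopology ι]
  [MeasurableSpace ι] [OpensMeasurableSpace ι] {μ : Measure ι}

lemma aestronglyMeasurable_uncurry_of_ae_continuous [TopologicalSpace E]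
    [TopologicalSpace.PseudoMetrizableSpace E] [Zero E] {f : ι → Ω → E}
    (hf : ∀ i, StronglyMeasurable (f i)) (hcont : ∀ᵐ ω ∂P, Continuous fun i => f i ω) :
    AEStronglyMeasurable (Function.uncurry f) (μ.prod P) := by
  let N : Set Ω := toMeasurable P {ω | ¬Continuous fun i => f i ω}
  have hN_null : ∀ᵐ ω ∂P, ω ∉ N :=
    measure_eq_zero_iff_ae_notMem.mp ((measure_toMeasurable _).trans hcont)
  -- Zeroing the process on the null set `N` makes every path continuous.
  let g : ι → Ω → E := fun i => Nᶜ.indicator (f i)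
  have hg_meas (i : ι) : StronglyMeasurable (g i) :=
    (hf i).indicator (measurableSet_toMeasurable _ _).compl
  have hg_cont (ω : Ω) : Continuous fun i => g i ω := by
    by_cases hω : ω ∈ N
    · simpa [g, hω] using continuous_const
    · have hcont_ω : Continuous fun i => f i ω :=
        not_not.mp fun hdisc => hω (subset_toMeasurable _ _ hdisc)
      simpa [g, hω] using hcont_ω
  refine ⟨Function.uncurry g,
    stronglyMeasurable_uncurry_of_continuous_of_stronglyMeasurable hg_cont hg_meas, ?_⟩
  filter_upwards [Measure.quasiMeasurePreserving_snd.ae hN_null] with p hp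
  simp [Function.uncurry, g, hp]

variable {s : Set ι} [SigmaFinite μ] [SFinite P]

lemma aestronglyMeasurable_uncurry_of_ae_continuousOn_s14 [TopologicalSpace E]
    [TopologicalSpace.PseudoMetrizableSpace E] [Zero E] {f : ι → Ω → E} (hs : MeasurableSet s)
    (hf : ∀ i ∈ s, StronglyMeasurable (f i))
    (hcont : ∀ᵐ ω ∂P, ContinuousOn (fun i => f i ω) s) :
    AEStronglyMeasurable (Function.uncurry f) ((μ.restrict s).prod P) := by
  have hcoe : MeasurableEmbedding ((↑) : s → ι) := .subtype_coe hs
  have : SigmaFinite (μ.comap ((↑) : s → ι)) :=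
    .of_map _ hcoe.measurable.aemeasurable (by rw [map_comap_subtype_coe hs]; infer_instance)
  have hprod : (μ.restrict s).prod P
      = ((μ.comap ((↑) : s → ι)).prod P).map (Prod.map (↑) id) := by
    rw [← Measure.map_prod_map _ _ hcoe.measurable measurable_id, map_comap_subtype_coe hs,
      Measure.map_id]
  rw [hprod, (hcoe.prodMap .id).aestronglyMeasurable_map_iff]
  exact aestronglyMeasurable_uncurry_of_ae_continuous (f := fun i : s => f i)
    (fun i => hf i i.2) (hcont.mono fun ω hω => hω.domRestrict)

lemma ae_integrableOn_of_ae_continuousOn [NormedAddCommGroup E] {f : ι → Ω → E}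
    (hs : MeasurableSet s) (hf : ∀ i ∈ s, StronglyMeasurable (f i))
    (hcont : ∀ᵐ ω ∂P, ContinuousOn (fun i => f i ω) s)
    (hfin : ∫⁻ i in s, ∫⁻ ω, ‖f i ω‖ₑ ∂P ∂μ ≠ ⊤) :
    ∀ᵐ ω ∂P, IntegrableOn (fun i => f i ω) s μ := by
  have hmeas : AEStronglyMeasurable (Function.uncurry f) ((μ.restrict s).prod P) :=
    aestronglyMeasurable_uncurry_of_ae_continuousOn_s14 hs hf hcont
  have hint : Integrable (Function.uncurry f) ((μ.restrict s).prod P) := by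
    refine ⟨hmeas, ?_⟩
    rw [HasFiniteIntegral, lintegral_prod _ hmeas.enorm]
    exact hfin.lt_top
  exact hint.prod_left_ae

end AlmostSureFiniteness

section ExponentialDiscount

variable {Ω E : Type*} [MeasurableSpace Ω] {P : Measure Ω} [NormedAddCommGroup E] [NormedSpace ℝ E]
  {B : ℝ → Ω → E} {α β C : ℝ}

lemma lintegral_enorm_exp_smul_le {Y : Ω → E} {t : ℝ}
    (hY : ∫⁻ ω, ‖Y ω‖ₑ ∂P ≤ ENNReal.ofReal (C * Real.exp (β * t))) :
    ∫⁻ ω, ‖Real.exp (-α * t) • Y ω‖ₑ ∂P ≤ ENNReal.ofReal (C * Real.exp ((β - α) * t)) := by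
  have hexp : Real.exp (-α * t) * (C * Real.exp (β * t)) = C * Real.exp ((β - α) * t) := by
    rw [mul_left_comm, ← Real.exp_add]
    ring_nf
  calc ∫⁻ ω, ‖Real.exp (-α * t) • Y ω‖ₑ ∂P
      = ENNReal.ofReal (Real.exp (-α * t)) * ∫⁻ ω, ‖Y ω‖ₑ ∂P := by
        simp only [enorm_smul, Real.enorm_of_nonneg (Real.exp_nonneg _)]
        exact lintegral_const_mul' _ _ ENNReal.ofReal_ne_top
    _ ≤ ENNReal.ofReal (Real.exp (-α * t)) * ENNReal.ofReal (C * Real.exp (β * t)) := by gcongr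
    _ = ENNReal.ofReal (C * Real.exp ((β - α) * t)) := by
        rw [← ENNReal.ofReal_mul (Real.exp_nonneg _), hexp]

lemma ae_tendsto_exp_smul_zero (hβ : β < α) (hmeas : ∀ n : ℕ, AEStronglyMeasurable (B n) P)
    (hgrowth : ∀ n : ℕ, ∫⁻ ω, ‖B n ω‖ₑ ∂P ≤ ENNReal.ofReal (C * Real.exp (β * n))) :
    ∀ᵐ ω ∂P, Tendsto (fun n : ℕ => Real.exp (-α * n) • B n ω) atTop (nhds 0) := by
  have hsummable : Summable fun n : ℕ => C * Real.exp ((β - α) * n) := by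
    simpa only [mul_comm] using
      (Real.summable_exp_nat_mul_iff.mpr (sub_neg.mpr hβ)).mul_left C
  exact ae_tendsto_zero_of_tsum_lintegral_enorm_ne_top (fun n => (hmeas n).const_smul _)
    (ne_top_of_le_ne_top hsummable.tsum_ofReal_ne_top
      (ENNReal.tsum_le_tsum fun n => lintegral_enorm_exp_smul_le (hgrowth n)))

lemma ae_integrableOn_exp_smul [SFinite P] (hβ : β < α)
    (hmeas : ∀ t, 0 ≤ t → StronglyMeasurable (B t))
    (hcont : ∀ᵐ ω ∂P, ContinuousOn (fun t => B t ω) (Set.Ici 0))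
    (hgrowth : ∀ t, 0 ≤ t → ∫⁻ ω, ‖B t ω‖ₑ ∂P ≤ ENNReal.ofReal (C * Real.exp (β * t))) :
    ∀ᵐ ω ∂P, IntegrableOn (fun s => Real.exp (-α * s) • B s ω) (Set.Ioi 0) := by
  have hbound : IntegrableOn (fun s => C * Real.exp ((β - α) * s)) (Set.Ioi 0) :=
    (integrableOn_exp_mul_Ioi (sub_neg.mpr hβ) 0).const_mul C
  refine ae_integrableOn_of_ae_continuousOn measurableSet_Ioi
    (fun s hs => (hmeas s (Set.mem_Ioi.mp hs).le).const_smul _) ?_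
    (ne_top_of_le_ne_top hbound.lintegral_lt_top.ne ?_)
  · filter_upwards [hcont] with ω hω
    exact ContinuousOn.smul (by fun_prop) (hω.mono Set.Ioi_subset_Ici_self)
  · exact setLIntegral_mono (by fun_prop) fun s hs =>
      lintegral_enorm_exp_smul_le (hgrowth s (Set.mem_Ioi.mp hs).le)

end ExponentialDiscount

section MomentGrowth

lemma rpow_le_mul_exp {p β t : ℝ} (hp : 0 < p) (hβ : 0 < β) (ht : 0 ≤ t) :
    t ^ p ≤ (p / β) ^ p * Real.exp (β * t) := by
  have hlin : β * t / p ≤ Real.exp (β * t / p) :=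
    (le_add_of_nonneg_right zero_le_one).trans (Real.add_one_le_exp _)
  calc t ^ p = (p / β * (β * t / p)) ^ p := by congr 1; field_simp
    _ = (p / β) ^ p * (β * t / p) ^ p := Real.mul_rpow (by positivity) (by positivity)
    _ ≤ (p / β) ^ p * Real.exp (β * t / p) ^ p := by gcongr
    _ = (p / β) ^ p * Real.exp (β * t) := by
        rw [← Real.exp_mul, div_mul_cancel₀ _ hp.ne']

variable {Ω : Type*} [MeasurableSpace Ω] {P : Measure Ω} [IsProbabilityMeasure P] {Y : Ω → ℝ}

lemma lintegral_enorm_le_sqrt_integral_mul_self (hY : MemLp Y 2 P) :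
    ∫⁻ ω, ‖Y ω‖ₑ ∂P ≤ ENNReal.ofReal √(∫ ω, Y ω * Y ω ∂P) := by
  calc ∫⁻ ω, ‖Y ω‖ₑ ∂P = eLpNorm Y 1 P := eLpNorm_one_eq_lintegral_enorm.symm
    _ ≤ eLpNorm Y 2 P := eLpNorm_le_eLpNorm_of_exponent_le one_le_two hY.aestronglyMeasurable
    _ = ENNReal.ofReal √(∫ ω, Y ω * Y ω ∂P) := by
        rw [hY.eLpNorm_eq_integral_rpow_norm two_ne_zero ENNReal.ofNat_ne_top, Real.sqrt_eq_rpow]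
        simp [sq]

lemma lintegral_enorm_le_exp_of_integral_mul_self_eq_rpow {H β t : ℝ} (hH : 0 < H) (hβ : 0 < β)
    (ht : 0 ≤ t) (hY : MemLp Y 2 P) (hvar : ∫ ω, Y ω * Y ω ∂P = t ^ (2 * H)) :
    ∫⁻ ω, ‖Y ω‖ₑ ∂P ≤ ENNReal.ofReal ((H / β) ^ H * Real.exp (β * t)) := by
  have hsqrt : √(t ^ (2 * H)) = t ^ H := by
    rw [mul_comm, Real.rpow_mul ht, Real.rpow_two, Real.sqrt_sq (Real.rpow_nonneg ht H)]
  calc ∫⁻ ω, ‖Y ω‖ₑ ∂P ≤ ENNReal.ofReal (t ^ H) := by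
        rw [← hsqrt, ← hvar]
        exact lintegral_enorm_le_sqrt_integral_mul_self hY
    _ ≤ ENNReal.ofReal ((H / β) ^ H * Real.exp (β * t)) :=
        ENNReal.ofReal_le_ofReal (rpow_le_mul_exp hH hβ ht)

lemma lintegral_enorm_le_exp_of_fractionalBrownian_covariance {B : ℝ → Ω → ℝ} {H β : ℝ}
    (hH : 0 < H) (hβ : 0 < β) (hgauss : ∀ t, 0 ≤ t → HasGaussianLaw (B t) P)
    (hcov : ∀ s t, 0 ≤ s → 0 ≤ t →
      ∫ ω, B s ω * B t ω ∂P = 1 / 2 * (s ^ (2 * H) + t ^ (2 * H) - |t - s| ^ (2 * H)))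
    {t : ℝ} (ht : 0 ≤ t) :
    ∫⁻ ω, ‖B t ω‖ₑ ∂P ≤ ENNReal.ofReal ((H / β) ^ H * Real.exp (β * t)) := by
  have hvar : ∫ ω, B t ω * B t ω ∂P = t ^ (2 * H) := by
    rw [hcov t t ht ht, sub_self, abs_zero, Real.zero_rpow (by positivity)]
    ring
  exact lintegral_enorm_le_exp_of_integral_mul_self_eq_rpow hH hβ ht (hgauss t ht).memLp_two hvar

end MomentGrowth

theorem stmt_14_general {Ω E : Type*} [MeasurableSpace Ω]
    [NormedAddCommGroup E] [NormedSpace ℝ E] [CompleteSpace E]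
    (P : Measure Ω) [SFinite P] (B : ℝ → Ω → E)
    (hBmeas : ∀ t, 0 ≤ t → StronglyMeasurable (B t))
    (hBcont : ∀ᵐ ω ∂P, ContinuousOn (fun t => B t ω) (Set.Ici 0))
    (α β C : ℝ) (hα : 0 < α) (hβ : β < α)
    (hBgrowth : ∀ t, 0 ≤ t → ∫⁻ ω, ‖B t ω‖ₑ ∂P ≤ ENNReal.ofReal (C * Real.exp (β * t)))
    (Z : ℝ → Ω → E) (hZ : ∀ t ω, Z t ω = ∫ s in (0 : ℝ)..t, Real.exp (-α * s) • B s ω)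
    (Zinf : Ω → E) (hZinf : ∀ ω, Zinf ω = ∫ s in Set.Ioi (0 : ℝ), Real.exp (-α * s) • B s ω)
    (L : ℝ → E) (hLint : IntervalIntegrable L volume 0 1) (hLper : Function.Periodic L 1)
    (A : ℝ → E) (hA : ∀ t, A t = ∫ s in (0 : ℝ)..t, Real.exp (-α * s) • L s)
    (Ainf : E) (hAinf : Ainf = (1 - Real.exp (-α))⁻¹ • A 1)
    (X : ℝ → Ω → E)
    (hX : ∀ t ω, X t ω = Real.exp (α * t) • A t + (α * Real.exp (α * t)) • Z t ω + B t ω) :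
    ∀ᵐ ω ∂P, Tendsto (fun n : ℕ => Real.exp (-α * n) • X n ω) atTop
      (nhds (Ainf + α • Zinf ω)) := by
  have hA_lim : Tendsto (fun n : ℕ => A n) atTop (nhds Ainf) := by
    simpa only [hAinf, hA] using tendsto_intervalIntegral_exp_smul_of_periodic hα hLper hLint
  filter_upwards [ae_integrableOn_exp_smul hβ hBmeas hBcont hBgrowth,
    ae_tendsto_exp_smul_zero hβ (fun n => (hBmeas n n.cast_nonneg).aestronglyMeasurable)
      fun n => hBgrowth n n.cast_nonneg] with ω hint hB_lim
  have hZ_lim : Tendsto (fun n : ℕ => Z n ω) atTop (nhds (Zinf ω)) := by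
    simp only [hZ, hZinf]
    exact intervalIntegral_tendsto_integral_Ioi 0 hint tendsto_natCast_atTop_atTop
  have hX_eq (n : ℕ) :
      Real.exp (-α * n) • X n ω = A n + α • Z n ω + Real.exp (-α * n) • B n ω := by
    have hexp : Real.exp (-α * n) * Real.exp (α * n) = 1 := by
      rw [neg_mul, Real.exp_neg, inv_mul_cancel₀ (Real.exp_ne_zero _)]
    simp only [hX, smul_add, smul_smul, mul_left_comm _ α, hexp, one_smul, mul_one]
  simpa only [hX_eq, add_zero] using (hA_lim.add (hZ_lim.const_smul α)).add hB_lim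

/-- Almost surely, as the integer `n → ∞`, `e^{-α n} X_n → A_∞ + α Z_∞`. -/
theorem stmt_14 {Ω : Type*} [MeasurableSpace Ω] (P : Measure Ω) [IsProbabilityMeasure P]
    (H : ℝ) (hH1 : 1 / 2 ≤ H) (hH2 : H < 1)
    (B : ℝ → Ω → ℝ)
    (hBmeas : ∀ t : ℝ, Measurable (B t))
    (hBgauss : ∀ (m : ℕ) (t : Fin m → ℝ) (c : Fin m → ℝ), (∀ i, 0 ≤ t i) →
      ∃ v : NNReal, Measure.map (fun ω => ∑ i, c i * B (t i) ω) P = gaussianReal 0 v)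
    (hB0 : ∀ ω, B 0 ω = 0)
    (hBcov : ∀ s t : ℝ, 0 ≤ s → 0 ≤ t →
      ∫ ω, B s ω * B t ω ∂P = 1 / 2 * (s ^ (2 * H) + t ^ (2 * H) - |t - s| ^ (2 * H)))
    (hBcont : ∀ᵐ ω ∂P, ContinuousOn (fun t => B t ω) (Set.Ici (0 : ℝ)))
    (α : ℝ) (hα : 0 < α)
    (Z : ℝ → Ω → ℝ)
    (hZ : ∀ (t : ℝ) (ω : Ω), Z t ω = ∫ s in (0:ℝ)..t, Real.exp (-α * s) * B s ω)
    (Zinf : Ω → ℝ)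
    (hZinf : ∀ ω : Ω, Zinf ω = ∫ s in Set.Ioi (0:ℝ), Real.exp (-α * s) * B s ω)
    (L : ℝ → ℝ)
    (hLmeas : Measurable L) (hLbdd : ∃ M : ℝ, ∀ t : ℝ, |L t| ≤ M)
    (hLper : ∀ t : ℝ, L (t + 1) = L t)
    (A : ℝ → ℝ) (hA : ∀ t : ℝ, A t = ∫ s in (0:ℝ)..t, Real.exp (-α * s) * L s)
    (Ainf : ℝ) (hAinf : Ainf = A 1 / (1 - Real.exp (-α)))
    (X : ℝ → Ω → ℝ)
    (hX : ∀ (t : ℝ) (ω : Ω), X t ω = Real.exp (α * t) * A t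
        + α * Real.exp (α * t) * Z t ω + B t ω) :
    ∀ᵐ ω ∂P, Tendsto (fun n : ℕ => Real.exp (-α * n) * X n ω)
      atTop (nhds (Ainf + α * Zinf ω)) := by
  have hgauss (t : ℝ) (ht : 0 ≤ t) : HasGaussianLaw (B t) P := by
    obtain ⟨v, hv⟩ := hBgauss 1 (fun _ => t) (fun _ => 1) fun _ => ht
    exact HasLaw.hasGaussianLaw (μ := gaussianReal 0 v)
      ⟨(hBmeas t).aemeasurable, by simpa using hv⟩
  obtain ⟨M, hM⟩ := hLbdd
  have hLint : IntervalIntegrable L volume 0 1 :=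
    (intervalIntegrable_const (c := M)).mono_fun' hLmeas.aestronglyMeasurable (.of_forall hM)
  exact stmt_14_general P B (fun t _ => (hBmeas t).stronglyMeasurable) hBcont α (α / 2) _ hα
    (half_lt_self hα) (fun _ => lintegral_enorm_le_exp_of_fractionalBrownian_covariance
      (by linarith) (half_pos hα) hgauss hBcov)
    Z hZ Zinf hZinf L hLint hLper A hA Ainf (hAinf.trans (div_eq_inv_mul _ _)) X hX
end
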